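/- Let E be a real normed space, Γ a set, and Φ : E → c₀(Γ) a map. Suppose for every finite set A ⊆ Γ there is a separable subspace Z_A of E such that (a) Z_A ⊆ Z_B whenever A ⊆ B are finite subsets of Γ, and (b) x belongs to the norm-closure of the linear span of ∪_{n∈ℕ} Z_{K_n} whenever x ∈ E and {K_n : n ∈ ℕ} is an increasing sequence of finite subsets of Γ whose union contains supp(Φx) = {γ ∈ Γ : Φx(γ) ≠ 0}. Then for every x ∈ E there exists a separable subspace Z(x) of E such that whenever {x_n : n ∈ ℕ} is a sequence in E with lim_n ‖Φx_n − Φx‖_∞ = 0, one has x in the norm-closure of the linear span of ∪_{n∈ℕ} Z(x_n). -/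

import Mathlib

open Set Metric Topology Filter

/-!
Take for `W x` the supremum of the subspaces `Z A` over all finite `A ⊆ supp (Φ x)`; there are
only countably many such `A`. If `Φ (xs n) → Φ x` even just pointwise, then every finite subset of
`supp (Φ x)` is eventually contained in `supp (Φ (xs n))`, so `W x` lies in the span of the
`W (xs n)`. Exhausting the countable set `supp (Φ x)` by finite sets gives `x ∈ closure (W x)`.
-/

universe w

section FinsetSup

variable {Γ : Type*}

/-- The supremum of a family `Z`, indexed by finite sets, over the finite subsets of a possibly
infinite set `S`. Applied to `S = supp (Φ x)` it gives the subspace attached to `x`. The family `Z`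
need not be monotone, so for finite `S` this may be larger than `Z S`. -/
def finsetSup {α : Type*} [CompleteLattice α] (Z : Finset Γ → α) (S : Set Γ) : α :=
  ⨆ A : {A : Finset Γ // (A : Set Γ) ⊆ S}, Z A

section Lattice

variable {α : Type*} [CompleteLattice α] (Z : Finset Γ → α) {S : Set Γ}

theorem le_finsetSup {A : Finset Γ} (hA : (A : Set Γ) ⊆ S) : Z A ≤ finsetSup Z S :=
  le_iSup (fun A : {A : Finset Γ // (A : Set Γ) ⊆ S} => Z A) ⟨A, hA⟩

theorem finsetSup_le_iSup_finsetSup {ι : Sort*} {T : ι → Set Γ}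
    (h : ∀ A : Finset Γ, (A : Set Γ) ⊆ S → ∃ i, (A : Set Γ) ⊆ T i) :
    finsetSup Z S ≤ ⨆ i, finsetSup Z (T i) :=
  iSup_le fun ⟨A, hA⟩ =>
    let ⟨i, hi⟩ := h A hA
    le_iSup_of_le i (le_finsetSup Z hi)

end Lattice

theorem countable_setOf_finset_coe_subset {S : Set Γ} (hS : S.Countable) :
    {A : Finset Γ | (A : Set Γ) ⊆ S}.Countable := by
  refine ((countable_ofPred_finite_subset hS).preimage Finset.coe_injective).mono fun A hA => ?_
  exact ⟨A.finite_toSet, hA⟩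

theorem exists_monotone_finset_iUnion_eq {S : Set Γ} (hS : S.Countable) :
    ∃ K : ℕ → Finset Γ, Monotone K ∧ ⋃ n, (K n : Set Γ) = S := by
  let K := hS.finiteExhaustion
  refine ⟨fun n => (K.finite n).toFinset, fun m n hmn => ?_, ?_⟩
  · exact Finite.toFinset_mono (OrderHomClass.mono K hmn)
  · simpa only [Finite.coe_toFinset] using K.iUnion_eq

end FinsetSup

section Separable

variable {𝕜 E : Type*} [Semiring 𝕜] [TopologicalSpace 𝕜] [TopologicalSpace.SeparableSpace 𝕜]
  [AddCommMonoid E] [Module 𝕜 E] [TopologicalSpace E] [ContinuousAdd E] [ContinuousSMul 𝕜 E]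

theorem isSeparable_iSup_submodule {ι : Sort*} [Countable ι] {p : ι → Submodule 𝕜 E}
    (hp : ∀ i, TopologicalSpace.IsSeparable (p i : Set E)) :
    TopologicalSpace.IsSeparable ((⨆ i, p i : Submodule 𝕜 E) : Set E) := by
  rw [Submodule.iSup_eq_span]
  exact (TopologicalSpace.IsSeparable.iUnion hp).span

theorem isSeparable_finsetSup {Γ : Type*} {Z : Finset Γ → Submodule 𝕜 E}
    (hZ : ∀ A, TopologicalSpace.IsSeparable (Z A : Set E)) {S : Set Γ} (hS : S.Countable) :
    TopologicalSpace.IsSeparable (↑(finsetSup Z S) : Set E) :=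
  have : Countable {A : Finset Γ // (A : Set Γ) ⊆ S} :=
    (countable_setOf_finset_coe_subset hS).to_subtype
  isSeparable_iSup_submodule fun A => hZ A

end Separable

section Support

variable {Γ ι : Type*} {l : Filter ι}

theorem eventually_finset_subset_support {M : Type*} [Zero M] [TopologicalSpace M] [T1Space M]
    {f : ι → Γ → M} {g : Γ → M} (hf : Tendsto f l (𝓝 g)) {A : Finset Γ}
    (hA : (A : Set Γ) ⊆ Function.support g) :
    ∀ᶠ i in l, (A : Set Γ) ⊆ Function.support (f i) :=
  A.eventually_all.mpr fun γ hγ => (tendsto_pi_nhds.mp hf γ).eventually_ne (hA hγ)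

theorem countable_support_of_tendsto_cofinite {M : Type*} [Zero M] [TopologicalSpace M] [T1Space M]
    [FirstCountableTopology M] {f : Γ → M} (hf : Tendsto f cofinite (𝓝 0)) :
    (Function.support f).Countable := by
  simpa only [ker_nhds] using! hf.countable_compl_preimage_ker

theorem tendsto_cofinite_zero_of_finite_le_norm {F : Type*} [SeminormedAddGroup F] {f : Γ → F}
    (hf : ∀ ε : ℝ, 0 < ε → {γ | ε ≤ ‖f γ‖}.Finite) : Tendsto f cofinite (𝓝 0) :=
  Metric.tendsto_nhds.mpr fun ε hε => by
    simpa only [eventually_cofinite, dist_zero_right, not_lt] using hf ε hε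

theorem tendsto_of_tendsto_iSup_norm_sub {F : Type*} [SeminormedAddCommGroup F] {f : ι → Γ → F}
    {g : Γ → F} (hf : ∀ i, Tendsto (f i) cofinite (𝓝 0)) (hg : Tendsto g cofinite (𝓝 0))
    (hfg : Tendsto (fun i => ⨆ γ, ‖f i γ - g γ‖) l (𝓝 0)) : Tendsto f l (𝓝 g) := by
  have hbdd (i : ι) : BddAbove (range fun γ => ‖f i γ - g γ‖) :=
    ((hf i).sub hg).norm.bddAbove_range_of_cofinite
  refine tendsto_pi_nhds.mpr fun γ => tendsto_iff_norm_sub_tendsto_zero.mpr ?_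
  exact squeeze_zero (fun _ => norm_nonneg _) (fun i => le_ciSup (hbdd i) γ) hfg

end Support

theorem exists_separable_subspace_assignment_general
    {𝕜 E : Type*} [Semiring 𝕜] [TopologicalSpace 𝕜] [TopologicalSpace.SeparableSpace 𝕜]
    [AddCommMonoid E] [Module 𝕜 E] [TopologicalSpace E] [ContinuousAdd E] [ContinuousSMul 𝕜 E]
    {Γ M : Type*} [Zero M] [TopologicalSpace M] [T1Space M]
    (Φ : E → Γ → M) (hΦ : ∀ x, (Function.support (Φ x)).Countable)
    (Z : Finset Γ → Submodule 𝕜 E)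
    (hZsep : ∀ A, TopologicalSpace.IsSeparable (Z A : Set E))
    (hb : ∀ (x : E) (K : ℕ → Finset Γ), Monotone K →
      ⋃ n, (K n : Set Γ) = Function.support (Φ x) →
      x ∈ closure (Submodule.span 𝕜 (⋃ n, (Z (K n) : Set E)) : Set E)) :
    ∃ W : E → Submodule 𝕜 E,
      (∀ x, TopologicalSpace.IsSeparable (W x : Set E)) ∧
      ∀ (x : E) {ι : Type w} (l : Filter ι) [l.NeBot] (xs : ι → E),
        Tendsto (fun i => Φ (xs i)) l (𝓝 (Φ x)) →
        x ∈ closure (Submodule.span 𝕜 (⋃ i, (W (xs i) : Set E)) : Set E) := by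
  refine ⟨fun x => finsetSup Z (Function.support (Φ x)),
    fun x => isSeparable_finsetSup hZsep (hΦ x), fun x ι l _ xs hxs => ?_⟩
  obtain ⟨K, hK, hKx⟩ := exists_monotone_finset_iUnion_eq (hΦ x)
  have hx := hb x K hK hKx
  rw [← Submodule.iSup_eq_span] at hx ⊢
  refine closure_mono (SetLike.coe_subset_coe.mpr ?_) hx
  calc ⨆ n, Z (K n)
      ≤ finsetSup Z (Function.support (Φ x)) :=
        iSup_le fun n => le_finsetSup Z (hKx ▸ subset_iUnion (fun n => (K n : Set Γ)) n)
    _ ≤ ⨆ i, finsetSup Z (Function.support (Φ (xs i))) :=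
        finsetSup_le_iSup_finsetSup Z fun _ hA => (eventually_finset_subset_support hxs hA).exists

/-- condition (i) implies condition (iii). -/
theorem exists_separable_subspace_assignment
    {E : Type*} [NormedAddCommGroup E] [NormedSpace ℝ E] {Γ : Type*}
    (Φ : E → Γ → ℝ)
    -- `Φ` takes values in `c₀(Γ)`
    (hc0 : ∀ x : E, ∀ ε : ℝ, 0 < ε → {γ : Γ | ε ≤ |Φ x γ|}.Finite)
    (Z : Finset Γ → Submodule ℝ E)
    (hZsep : ∀ A : Finset Γ, TopologicalSpace.IsSeparable (Z A : Set E))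
    -- (a)
    (ha : ∀ A B : Finset Γ, A ⊆ B → Z A ≤ Z B)
    -- (b)
    (hb : ∀ (x : E) (K : ℕ → Finset Γ), Monotone K →
      {γ : Γ | Φ x γ ≠ 0} ⊆ ⋃ n : ℕ, (K n : Set Γ) →
      x ∈ closure (Submodule.span ℝ (⋃ n : ℕ, (Z (K n) : Set E)) : Set E)) :
    ∃ W : E → Submodule ℝ E,
      (∀ x : E, TopologicalSpace.IsSeparable (W x : Set E)) ∧
      ∀ (x : E) (xs : ℕ → E),
        Tendsto (fun n => ⨆ γ : Γ, |Φ (xs n) γ - Φ x γ|) atTop (𝓝 0) →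
        x ∈ closure (Submodule.span ℝ (⋃ n : ℕ, (W (xs n) : Set E)) : Set E) := by
  have hΦ (x : E) : Tendsto (Φ x) cofinite (𝓝 0) :=
    tendsto_cofinite_zero_of_finite_le_norm (hc0 x)
  obtain ⟨W, hWsep, hW⟩ := exists_separable_subspace_assignment_general Φ
    (fun x => countable_support_of_tendsto_cofinite (hΦ x)) Z hZsep
    fun x K hK hKx => hb x K hK hKx.ge
  exact ⟨W, hWsep, fun x xs hxs =>
    hW x atTop xs (tendsto_of_tendsto_iSup_norm_sub (fun n => hΦ (xs n)) (hΦ x) hxs)⟩
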